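/- Let ℱ denote the set of all finite image partition regular matrices with entries from ℚ, and let B be any (finite or infinite) image partition regular matrix. Then I(B) ∩ (⋂_{A ∈ ℱ} I(A)) ≠ ∅. -/

import Mathlib

/- `ℕ+` plays the role of the paper's `ℕ = {1,2,3,…}`.  `Ultrafilter ℕ+` is `βℕ`. -/

/-- Product of ultrafilters: `U ∈ umul p q ↔ {x | {y | x*y ∈ U} ∈ q} ∈ p`. -/
def umul (p q : Ultrafilter ℕ+) : Ultrafilter ℕ+ :=
  p.bind fun x => q.map fun y => x * y

/-- Sum of ultrafilters: `U ∈ uadd p q ↔ {x | {y | x+y ∈ U} ∈ q} ∈ p`. -/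
def uadd (p q : Ultrafilter ℕ+) : Ultrafilter ℕ+ :=
  p.bind fun x => q.map fun y => x + y

/-- The matrix-vector product `Ax` (computed in `ℚ`) of a row-finite matrix `A`
with a vector `x` of positive integers. -/
noncomputable def mulVecQ {ι κ : Type} (A : ι → κ → ℚ) (x : κ → ℕ+) : ι → ℚ :=
  fun i => ∑ᶠ j, A i j * ((x j : ℕ) : ℚ)

/-- All entries of the vector `y` are (positive) natural numbers lying in `P`. -/
def entriesIn {ι : Type} (y : ι → ℚ) (P : Set ℕ+) : Prop :=
  ∀ i, ∃ n ∈ P, y i = ((n : ℕ) : ℚ)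

/-- `A` is image partition regular: for every finite coloring of `ℕ` there is
a vector `x` over `ℕ` all entries of whose image `Ax` are monochromatic. -/
def IPR {ι κ : Type} (A : ι → κ → ℚ) : Prop :=
  ∀ (r : ℕ) (c : ℕ+ → Fin r), ∃ (k : Fin r) (x : κ → ℕ+),
    entriesIn (mulVecQ A x) {n | c n = k}

/-- `I(A) = {p ∈ βℕ : for every P ∈ p there is x over ℕ with all entries of Ax in P}`. -/
def ISet {ι κ : Type} (A : ι → κ → ℚ) : Set (Ultrafilter ℕ+) :=
  {p | ∀ P ∈ p, ∃ x : κ → ℕ+, entriesIn (mulVecQ A x) P}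

/-!
Each `ISet A` is a closed subset of the compact space `βℕ`, and it is nonempty when `A` is image
partition regular. Scaling a solution by a positive integer makes `ISet A` a left ideal of
`(βℕ, ·)`; when `A` has finitely many rows, finitely many conditions can be met by one scalar, so
`ISet A` is also a right ideal. Products show that finitely many of these two-sided ideals have a
common point, so by compactness all of them do. If `p` is such a point and `q ∈ ISet B`, then
`p * q` lies in `ISet B` and in every `ISet A`.
-/

attribute [local instance] Ultrafilter.mul

theorem exists_ultrafilter_forall_mem_of_forall_coloring {α : Type*} {R : Set α → Prop}
    (hmono : Monotone R) (hcol : ∀ (r : ℕ) (c : α → Fin r), ∃ k, R {a | c a = k}) :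
    ∃ p : Ultrafilter α, ∀ P ∈ p, R P := by
  obtain ⟨p, hp⟩ := Ultrafilter.exists_ultrafilter_of_finite_inter_nonempty {Q | ¬ R Qᶜ} <| by
    intro T hT
    by_contra hempty
    have hmiss (a : α) : ∃ Q : T, a ∉ Q.1 := by
      by_contra! ha
      exact hempty ⟨a, fun Q hQ => ha ⟨Q, hQ⟩⟩
    -- Colour each point by a member of `T` that misses it.
    choose c hc using hmiss
    obtain ⟨k, hk⟩ := hcol _ fun a => T.equivFin (c a)
    refine hT (T.equivFin.symm k).2 (hmono (fun a ha => ?_) hk)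
    have hca : c a = T.equivFin.symm k := (Equiv.eq_symm_apply _).2 ha
    exact hca ▸ hc a
  refine ⟨p, fun P hP => by_contra fun hR => Ultrafilter.compl_notMem_iff.2 hP (hp ?_)⟩
  rwa [Set.mem_ofPred_eq, compl_compl]

theorem isClosed_setOf_ultrafilter_forall_mem {α : Type*} (R : Set α → Prop) :
    IsClosed {p : Ultrafilter α | ∀ P ∈ p, R P} := by
  simp only [Set.ofPred_forall]
  exact isClosed_iInter fun P => isClosed_imp (ultrafilter_isOpen_basic P) isClosed_const

theorem nonempty_iInter_of_isClosed_of_mul_mem {X T : Type*} [TopologicalSpace X]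
    [CompactSpace X] [Nonempty X] [Mul X] {I : T → Set X} (hclosed : ∀ t, IsClosed (I t))
    (hne : ∀ t, (I t).Nonempty) (hleft : ∀ t x, ∀ y ∈ I t, x * y ∈ I t)
    (hright : ∀ t, ∀ x ∈ I t, ∀ y, x * y ∈ I t) : (⋂ t, I t).Nonempty := by
  classical
  refine CompactSpace.iInter_nonempty hclosed fun s => ?_
  induction s using Finset.induction_on with
  | empty => simp
  | insert t s _ ih =>
    obtain ⟨x, hx⟩ := ih
    obtain ⟨y, hy⟩ := hne t
    rw [Set.mem_iInter₂] at hx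
    rw [Finset.set_biInter_insert]
    exact ⟨x * y, hleft t x y hy, Set.mem_iInter₂.2 fun r hr => hright r x (hx r hr) y⟩

section Matrix

variable {ι κ : Type} {A : ι → κ → ℚ} {p q : Ultrafilter ℕ+}

theorem mulVecQ_const_mul (A : ι → κ → ℚ) (a : ℕ+) (x : κ → ℕ+) (i : ι) :
    mulVecQ A (fun j => a * x j) i = ((a : ℕ) : ℚ) * mulVecQ A x i := by
  simp only [mulVecQ, PNat.mul_coe, Nat.cast_mul, mul_left_comm (A i _)]
  simp only [← smul_eq_mul ((a : ℕ) : ℚ), smul_finsum]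

theorem entriesIn.mono {y : ι → ℚ} {P Q : Set ℕ+} (hPQ : P ⊆ Q) (h : entriesIn y P) :
    entriesIn y Q := fun i =>
  let ⟨n, hn, hy⟩ := h i
  ⟨n, hPQ hn, hy⟩

theorem entriesIn.const_mul {a : ℕ+} {x : κ → ℕ+} {P : Set ℕ+}
    (h : entriesIn (mulVecQ A x) {n | a * n ∈ P}) :
    entriesIn (mulVecQ A fun j => a * x j) P := fun i =>
  let ⟨n, hn, hx⟩ := h i
  ⟨a * n, hn, by rw [mulVecQ_const_mul, hx, PNat.mul_coe, Nat.cast_mul]⟩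

theorem isClosed_ISet (A : ι → κ → ℚ) : IsClosed (ISet A) :=
  isClosed_setOf_ultrafilter_forall_mem _

theorem IPR.nonempty_ISet (hA : IPR A) : (ISet A).Nonempty :=
  exists_ultrafilter_forall_mem_of_forall_coloring (fun _ _ hPQ ⟨x, hx⟩ => ⟨x, hx.mono hPQ⟩) hA

theorem ISet.mul_mem_left (p : Ultrafilter ℕ+) (hq : q ∈ ISet A) : p * q ∈ ISet A := by
  intro P hP
  obtain ⟨a, ha⟩ := ((Ultrafilter.eventually_mul p q (· ∈ P)).1 hP).exists
  obtain ⟨x, hx⟩ := hq _ ha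
  exact ⟨_, hx.const_mul⟩

theorem ISet.mul_mem_right [Finite ι] (q : Ultrafilter ℕ+) (hp : p ∈ ISet A) :
    p * q ∈ ISet A := by
  intro P hP
  obtain ⟨x, hx⟩ := hp _ ((Ultrafilter.eventually_mul p q (· ∈ P)).1 hP)
  choose n hn hxn using hx
  obtain ⟨a, ha⟩ : ∃ a, ∀ i, n i * a ∈ P := (Filter.eventually_all.2 hn).exists
  have hax : entriesIn (mulVecQ A x) {m | a * m ∈ P} := fun i =>
    ⟨n i, by simpa only [Set.mem_ofPred_eq, mul_comm a] using ha i, hxn i⟩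
  exact ⟨_, hax.const_mul⟩

end Matrix

theorem nonempty_iInter_ISet {T : Type*} {ι κ : T → Type} [∀ t, Finite (ι t)]
    {A : ∀ t, ι t → κ t → ℚ} (hA : ∀ t, IPR (A t)) : (⋂ t, ISet (A t)).Nonempty :=
  nonempty_iInter_of_isClosed_of_mul_mem (fun t => isClosed_ISet (A t))
    (fun t => (hA t).nonempty_ISet) (fun _ p _ hq => ISet.mul_mem_left p hq)
    (fun _ _ hp q => ISet.mul_mem_right q hp)

/-- Theorem 2.5: if `B` is any (finite or infinite, row-finite)
image partition regular matrix and `ℱ` is the class of all finite image partition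
regular matrices with rational entries, then `I(B) ∩ ⋂_{A ∈ ℱ} I(A) ≠ ∅`. -/
theorem stmt_3 {ι κ : Type} (B : ι → κ → ℚ)
    (hrow : ∀ i, {j | B i j ≠ 0}.Finite) (hB : IPR B) :
    (ISet B ∩ ⋂ (u : ℕ) (v : ℕ) (A : Fin u → Fin v → ℚ) (_ : IPR A),
      ISet A).Nonempty := by
  obtain ⟨p, hp⟩ := nonempty_iInter_ISet
    (A := fun t : Σ u v : ℕ, {A : Fin u → Fin v → ℚ // IPR A} => t.2.2.1) fun t => t.2.2.2
  obtain ⟨q, hq⟩ := hB.nonempty_ISet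
  refine ⟨p * q, ISet.mul_mem_left p hq, ?_⟩
  simp only [Set.mem_iInter] at hp ⊢
  exact fun u v A hA => ISet.mul_mem_right q (hp ⟨u, v, A, hA⟩)
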